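/- The 7-dimensional nilpotent Lie algebra g_{2.2} is not an Einstein nilradical. -/

import Mathlib

open Matrix BigOperators Polynomial

noncomputable section

abbrev Law (n : ℕ) := (Fin n → ℝ) → (Fin n → ℝ) → (Fin n → ℝ)

/-- `i`-th canonical basis vector of `ℝ^n`. -/
def bVec {n : ℕ} (i : Fin n) : Fin n → ℝ := Pi.single i 1

def IsBilin {n : ℕ} (μ : Law n) : Prop :=
  (∀ X, IsLinearMap ℝ (μ X)) ∧ (∀ Y, IsLinearMap ℝ (fun X => μ X Y))

def IsSkew {n : ℕ} (μ : Law n) : Prop := ∀ X Y, μ X Y = - μ Y X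

def IsJacobi {n : ℕ} (μ : Law n) : Prop :=
  ∀ X Y Z, μ (μ X Y) Z + μ (μ Y Z) X + μ (μ Z X) Y = 0

def IsLieLaw {n : ℕ} (μ : Law n) : Prop := IsBilin μ ∧ IsSkew μ ∧ IsJacobi μ

/-- lower central series of the law `μ`. -/
def lcs {n : ℕ} (μ : Law n) : ℕ → Submodule ℝ (Fin n → ℝ)
  | 0 => ⊤
  | k + 1 => Submodule.span ℝ {z | ∃ x y, y ∈ lcs μ k ∧ z = μ x y}

def IsNilpotentLaw {n : ℕ} (μ : Law n) : Prop :=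
  IsLieLaw μ ∧ ∃ k, lcs μ k = ⊥

/-- the action of `GL_n(ℝ)` on laws: `(g·μ)(X,Y) = g μ(g⁻¹X, g⁻¹Y)`. -/
def act {n : ℕ} (g : GL (Fin n) ℝ) (μ : Law n) : Law n :=
  fun X Y =>
    (g : Matrix (Fin n) (Fin n) ℝ).mulVec
      (μ (((g⁻¹ : GL (Fin n) ℝ) : Matrix (Fin n) (Fin n) ℝ).mulVec X)
         (((g⁻¹ : GL (Fin n) ℝ) : Matrix (Fin n) (Fin n) ℝ).mulVec Y))

def IsDerivation {n : ℕ} (μ : Law n) (ψ : Matrix (Fin n) (Fin n) ℝ) : Prop :=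
  ∀ X Y, ψ.mulVec (μ X Y) = μ (ψ.mulVec X) Y + μ X (ψ.mulVec Y)

/-- the unnormalized moment map `m(μ) = 4 Ric_μ`, as a matrix in the canonical basis. -/
def momentMap {n : ℕ} (μ : Law n) : Matrix (Fin n) (Fin n) ℝ :=
  Matrix.of fun k l =>
    4 * (-(1/2) * ∑ i, ∑ j, μ (bVec k) (bVec i) j * μ (bVec l) (bVec i) j
      + (1/4) * ∑ i, ∑ j, μ (bVec i) (bVec j) k * μ (bVec i) (bVec j) l)

def IsEinsteinNilradical {n : ℕ} (μ : Law n) : Prop :=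
  ∃ g : GL (Fin n) ℝ, ∃ c : ℝ, ∃ φ : Matrix (Fin n) (Fin n) ℝ,
    c < 0 ∧ φ.IsSymm ∧ IsDerivation (act g μ) φ ∧
    momentMap (act g μ) = c • (1 : Matrix (Fin n) (Fin n) ℝ) + φ

/-- build a (bilinear) law from a table `c` of structure constants on the
canonical basis, antisymmetrized: `[e_i, e_j] = c i j - c j i`. -/
def mkLaw {n : ℕ} (c : Fin n → Fin n → Fin n → ℝ) : Law n :=
  fun X Y k => ∑ i, ∑ j, X i * Y j * (c i j k - c j i k)

/-- structure constants of `g_{2.2}`. -/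
def c22 : Fin 7 → Fin 7 → Fin 7 → ℝ := fun i j =>
  if i = 0 ∧ j = 1 then Pi.single 4 1
  else if i = 0 ∧ j = 2 then Pi.single 5 1
  else if i = 0 ∧ j = 3 then Pi.single 6 2
  else if i = 1 ∧ j = 2 then Pi.single 3 1
  else if i = 1 ∧ j = 5 then Pi.single 6 1
  else if i = 2 ∧ j = 4 then Pi.single 6 (-1)
  else if i = 2 ∧ j = 5 then Pi.single 6 1
  else 0

/-- the Lie algebra law of `g_{2.2}`. -/
def law22 : Law 7 := mkLaw c22



def rk : Fin 7 → ℕ := ![5, 4, 6, 2, 1, 3, 0]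

theorem law22_eq (X Y : Fin 7 → ℝ) : law22 X Y =
    ![0, 0, 0, X 1 * Y 2 - X 2 * Y 1, X 0 * Y 1 - X 1 * Y 0, X 0 * Y 2 - X 2 * Y 0,
      2 * (X 0 * Y 3 - X 3 * Y 0) + (X 1 * Y 5 - X 5 * Y 1) - (X 2 * Y 4 - X 4 * Y 2)
        + (X 2 * Y 5 - X 5 * Y 2)] := by
  funext k
  fin_cases k <;> simp [law22, mkLaw, c22, Fin.sum_univ_seven] <;> ring

theorem der_law22 (D : Matrix (Fin 7) (Fin 7) ℝ) (h : IsDerivation law22 D) :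
    D.BlockTriangular rk ∧ D 1 1 = D 2 2 ∧ D 4 4 = D 5 5 := by
  have H : ∀ i j k : Fin 7, D.mulVec (law22 (bVec i) (bVec j)) k =
      law22 (D.mulVec (bVec i)) (bVec j) k + law22 (bVec i) (D.mulVec (bVec j)) k := by
    intro i j k
    rw [h]; rfl
  have col : ∀ i, D.mulVec (bVec i) = fun k => D k i := by
    intro i; funext k; simp [bVec]
  simp only [col, law22_eq] at H
  have h1 := H 0 1
  have h2 := H 0 2
  have h3 := H 0 3
  have h4 := H 1 2
  have h5 := H 1 5
  have h6 := H 2 4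
  have h7 := H 2 5
  have g1 := H 0 4
  have g2 := H 0 5
  have g3 := H 1 3
  have g4 := H 1 4
  have g5 := H 2 3
  have g6 := H 3 4
  have g7 := H 3 5
  have g8 := H 4 5
  have z1 := H 0 6
  have z2 := H 1 6
  have z3 := H 2 6
  clear H
  simp [Fin.forall_fin_succ, bVec, Matrix.mulVec, dotProduct, Fin.sum_univ_seven] at h1 h2 h3 h4 h5 h6 h7 g1 g2 g3 g4 g5 g6 g7 g8 z1 z2 z3
  refine ⟨?_, ?_, ?_⟩
  · intro i j hij
    fin_cases i <;> fin_cases j <;> simp [rk] at hij <;> simp <;> grind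
  · grind
  · grind

theorem nilp_form (T S : Matrix (Fin 7) (Fin 7) ℝ) (hT : T.BlockTriangular rk)
    (hS : S.BlockTriangular rk) : ∃ a b1 b2 c1 c2 c3 d1 d2 d3 p q r s t u : ℝ,
    a = T 4 4 * S 0 0 * S 1 1 ∧ b1 = T 3 3 * S 1 1 * S 2 2 ∧ c1 = T 5 5 * S 0 0 * S 2 2 ∧
    ∀ X Y : Fin 7 → ℝ, T.mulVec (law22 (S.mulVec X) (S.mulVec Y)) =
    ![0, 0, 0, b1 * (X 1 * Y 2 - X 2 * Y 1) + c2 * (X 0 * Y 2 - X 2 * Y 0),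
      a * (X 0 * Y 1 - X 1 * Y 0) + b2 * (X 1 * Y 2 - X 2 * Y 1) + c3 * (X 0 * Y 2 - X 2 * Y 0),
      c1 * (X 0 * Y 2 - X 2 * Y 0),
      d1 * (X 0 * Y 1 - X 1 * Y 0) + d2 * (X 1 * Y 2 - X 2 * Y 1) + d3 * (X 0 * Y 2 - X 2 * Y 0)
       + p * (X 0 * Y 3 - X 3 * Y 0) + q * (X 1 * Y 5 - X 5 * Y 1) + r * (X 2 * Y 4 - X 4 * Y 2)
       + s * (X 0 * Y 5 - X 5 * Y 0) + t * (X 2 * Y 3 - X 3 * Y 2) + u * (X 2 * Y 5 - X 5 * Y 2)] := by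
  have t : ∀ i j, rk j < rk i → T i j = 0 := fun i j h => hT h
  have s : ∀ i j, rk j < rk i → S i j = 0 := fun i j h => hS h
  simp [Fin.forall_fin_succ, rk] at t s
  let L : Fin 7 → Fin 7 → Fin 7 → ℝ := fun a b k =>
    (T.mulVec (law22 (fun i => S i a) (fun i => S i b))) k
  refine ⟨_, _, L 1 2 4, _, L 0 2 3, L 0 2 4, L 0 1 6, L 1 2 6, L 0 2 6, L 0 3 6, L 1 5 6, L 2 4 6,
    L 0 5 6, L 2 3 6, L 2 5 6, rfl, rfl, rfl, ?_⟩
  intro X Y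
  simp only [L, law22_eq]
  funext k
  fin_cases k <;> simp [Matrix.mulVec, dotProduct, Fin.sum_univ_seven, t, s] <;> ring

theorem act_der {n : ℕ} (g : GL (Fin n) ℝ) (ν : Law n) (φ : Matrix (Fin n) (Fin n) ℝ)
    (h : IsDerivation ν φ) : IsDerivation (act g ν) (g.val * φ * g⁻¹.val) := by
  have hg : g⁻¹.val * g.val = 1 := by rw [← Units.val_mul]; simp
  intro X Y
  have e : ∀ X : Fin n → ℝ, g⁻¹.val.mulVec ((g.val * φ * g⁻¹.val).mulVec X) =
      φ.mulVec (g⁻¹.val.mulVec X) := by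
    intro X
    rw [Matrix.mulVec_mulVec, Matrix.mulVec_mulVec, ← Matrix.mul_assoc, ← Matrix.mul_assoc, hg,
      Matrix.one_mul]
  unfold act
  rw [e, e, ← Matrix.mulVec_add, ← h, Matrix.mulVec_mulVec, Matrix.mulVec_mulVec,
    Matrix.mul_assoc, hg, Matrix.mul_one]

theorem act_act {n : ℕ} (g k : GL (Fin n) ℝ) (ν : Law n) :
    act k (act g ν) = act (k * g) ν := by
  funext X Y
  simp only [act, Matrix.mulVec_mulVec, ← Units.val_mul, _root_.mul_inv_rev]

theorem act_one {n : ℕ} (ν : Law n) : act 1 ν = ν := by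
  funext X Y
  simp [act]

theorem der_of_act {n : ℕ} (g : GL (Fin n) ℝ) (ν : Law n) (φ : Matrix (Fin n) (Fin n) ℝ)
    (h : IsDerivation (act g ν) φ) : IsDerivation ν (g⁻¹.val * φ * g.val) := by
  have := act_der g⁻¹ _ _ h
  rwa [act_act, inv_mul_cancel, act_one, inv_inv] at this

theorem tr_aux {n : ℕ} (K : Matrix (Fin n) (Fin n) ℝ) (hK : Kᵀ * K = 1)
    (P P' : Fin n → Matrix (Fin n) (Fin n) ℝ)
    (h : ∀ k, P' k = K * (∑ a, K k a • P a) * Kᵀ) (k l : Fin n) :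
    ∑ i, ∑ j, P' k i j * P' l i j = ∑ a, ∑ b, K k a * K l b * ∑ i, ∑ j, P a i j * P b i j := by
  have e : ∀ A B : Matrix (Fin n) (Fin n) ℝ, ∑ i, ∑ j, A i j * B i j = (A * Bᵀ).trace := by
    intro A B
    simp [Matrix.trace, Matrix.mul_apply]
  simp only [e]
  have : ∀ A B : Matrix (Fin n) (Fin n) ℝ,
      ((K * A * Kᵀ) * (K * B * Kᵀ)ᵀ).trace = (A * Bᵀ).trace := by
    intro A B
    have : (K * A * Kᵀ) * (K * B * Kᵀ)ᵀ = K * (A * Bᵀ * Kᵀ) := by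
      simp only [Matrix.transpose_mul, Matrix.transpose_transpose]
      calc _ = K * A * (Kᵀ * K) * Bᵀ * Kᵀ := by simp only [Matrix.mul_assoc]
        _ = _ := by rw [hK]; simp only [Matrix.mul_assoc, Matrix.one_mul]
    rw [this, Matrix.trace_mul_comm, Matrix.mul_assoc, hK, Matrix.mul_one]
  rw [h, h, this, Matrix.transpose_sum, Finset.sum_mul_sum, Matrix.trace_sum]
  refine Finset.sum_congr rfl fun a _ => ?_
  rw [Matrix.trace_sum]
  refine Finset.sum_congr rfl fun b _ => ?_
  simp [Matrix.trace_smul, mul_assoc, mul_left_comm]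

theorem moment_act {n : ℕ} (K : GL (Fin n) ℝ) (hK : K⁻¹.val = K.valᵀ) (ν : Law n)
    (hν : ∀ X Y k, ν X Y k = ∑ i, ∑ j, X i * Y j * ν (bVec i) (bVec j) k) :
    momentMap (act K ν) = K.val * momentMap ν * K⁻¹.val := by
  have hKK : K.valᵀ * K.val = 1 := by rw [← hK, ← Units.val_mul]; simp
  have hN : ∀ a b k, act K ν (bVec a) (bVec b) k =
      ∑ l, K.val k l * ∑ i, ∑ j, K.val a i * K.val b j * ν (bVec i) (bVec j) l := by
    intro a b k
    simp only [act, hK, Matrix.mulVec, dotProduct]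
    refine Finset.sum_congr rfl fun l _ => ?_
    rw [hν]
    simp [bVec]
  have t1 := tr_aux K.val hKK (fun a => Matrix.of fun i j => ν (bVec a) (bVec i) j)
    (fun a => Matrix.of fun i j => act K ν (bVec a) (bVec i) j) (by
      intro k
      ext i j
      simp only [Matrix.of_apply, hN, Matrix.mul_apply, Matrix.sum_apply, Matrix.smul_apply,
        Matrix.transpose_apply, smul_eq_mul, Finset.mul_sum, Finset.sum_mul]
      refine Finset.sum_congr rfl fun l _ => ?_
      refine Finset.sum_congr rfl fun a _ => Finset.sum_congr rfl fun b _ => ?_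
      ring)
  have t2 := tr_aux K.val hKK (fun a => Matrix.of fun i j => ν (bVec i) (bVec j) a)
    (fun a => Matrix.of fun i j => act K ν (bVec i) (bVec j) a) (by
      intro k
      ext i j
      simp only [Matrix.of_apply, hN, Matrix.mul_apply, Matrix.sum_apply, Matrix.smul_apply,
        Matrix.transpose_apply, smul_eq_mul, Finset.mul_sum, Finset.sum_mul]
      refine Eq.trans (Finset.sum_congr rfl fun a _ => Finset.sum_comm) ?_
      refine Eq.trans Finset.sum_comm ?_
      refine Finset.sum_congr rfl fun l _ => Finset.sum_congr rfl fun a _ =>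
        Finset.sum_congr rfl fun b _ => ?_
      ring)
  ext k l
  simp only [Matrix.of_apply] at t1 t2
  simp only [momentMap, Matrix.of_apply, t1, t2, hK, Matrix.mul_apply, Matrix.transpose_apply]
  have e1 : ∀ F : Fin n → Fin n → ℝ, (∑ b, (∑ a, K.val k a * F a b) * K.val l b) =
      ∑ a, ∑ b, K.val k a * K.val l b * F a b := by
    intro F
    simp only [Finset.sum_mul]
    rw [Finset.sum_comm]
    refine Finset.sum_congr rfl fun a _ => Finset.sum_congr rfl fun b _ => ?_
    ring
  rw [e1]
  rw [Finset.mul_sum, Finset.mul_sum, ← Finset.sum_add_distrib, Finset.mul_sum]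
  refine Finset.sum_congr rfl fun a _ => ?_
  rw [Finset.mul_sum, Finset.mul_sum, ← Finset.sum_add_distrib, Finset.mul_sum]
  refine Finset.sum_congr rfl fun b _ => ?_
  ring

theorem qr (g : GL (Fin 7) ℝ) : ∃ K : GL (Fin 7) ℝ, K⁻¹.val = K.valᵀ ∧
    (K * g).val.BlockTriangular rk := by
  let e : Fin 7 → Fin 7 := ![6, 4, 3, 5, 1, 0, 2]
  let e' : Fin 7 → Fin 7 := ![5, 4, 6, 2, 1, 3, 0]
  have he : ∀ i, e (e' i) = i := by decide
  have he' : ∀ i, e' (e i) = i := by decide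
  let E : Fin 7 ≃ Fin 7 := ⟨e', e, he, he'⟩
  have hlt : ∀ i j, rk i < rk j → e' i < e' j := by decide
  let f : Fin 7 → EuclideanSpace ℝ (Fin 7) := fun j => WithLp.toLp 2 fun k => g.val k (e j)
  let b := InnerProductSpace.gramSchmidtOrthonormalBasis (𝕜 := ℝ) (by simp) f
  let M : Matrix (Fin 7) (Fin 7) ℝ := Matrix.of fun i k => b (e' i) k
  have hM : M * Mᵀ = 1 := by
    ext i j
    have := orthonormal_iff_ite.1 b.orthonormal (e' i) (e' j)
    rw [PiLp.inner_apply] at this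
    simp only [Matrix.mul_apply, Matrix.transpose_apply, Matrix.one_apply, M, Matrix.of_apply]
    simp only [RCLike.inner_apply, conj_trivial, E.injective.eq_iff, show ∀ i, e' i = E i from fun _ => rfl] at this ⊢
    rw [← this]
    exact Finset.sum_congr rfl fun _ _ => mul_comm _ _
  refine ⟨⟨M, Mᵀ, hM, mul_eq_one_comm.1 hM⟩, rfl, ?_⟩
  intro i j hij
  have := InnerProductSpace.gramSchmidtOrthonormalBasis_inv_triangular (𝕜 := ℝ) (by simp) f (hlt _ _ hij)
  rw [PiLp.inner_apply] at this
  simp only [RCLike.inner_apply, conj_trivial, f, he] at this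
  rw [Units.val_mul, Matrix.mul_apply, ← this]
  exact Finset.sum_congr rfl fun _ _ => mul_comm _ _

theorem law22_expand (g : GL (Fin 7) ℝ) (X Y : Fin 7 → ℝ) (k : Fin 7) :
    act g law22 X Y k = ∑ i, ∑ j, X i * Y j * act g law22 (bVec i) (bVec j) k := by
  have e : ∀ (M : Matrix (Fin 7) (Fin 7) ℝ) i, M.mulVec (bVec i) = fun k => M k i := by
    intro M i; funext k; simp [bVec]
  have hl : ∀ X Y : Fin 7 → ℝ, ∀ l, law22 (∑ i, X i • fun k => g⁻¹.val k i)
      (∑ j, Y j • fun k => g⁻¹.val k j) l =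
      ∑ i, ∑ j, X i * Y j * law22 (fun k => g⁻¹.val k i) (fun k => g⁻¹.val k j) l := by
    intro X Y l
    have hadd1 : ∀ A B C, law22 (A + B) C = law22 A C + law22 B C := by
      intro A B C; simp only [law22_eq]; funext k; fin_cases k <;> simp <;> ring
    have hadd2 : ∀ A B C, law22 C (A + B) = law22 C A + law22 C B := by
      intro A B C; simp only [law22_eq]; funext k; fin_cases k <;> simp <;> ring
    have hs1 : ∀ (c : ℝ) A C, law22 (c • A) C = c • law22 A C := by
      intro c A C; simp only [law22_eq]; funext k; fin_cases k <;> simp <;> ring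
    have hs2 : ∀ (c : ℝ) A C, law22 C (c • A) = c • law22 C A := by
      intro c A C; simp only [law22_eq]; funext k; fin_cases k <;> simp <;> ring
    let B : (Fin 7 → ℝ) →ₗ[ℝ] (Fin 7 → ℝ) →ₗ[ℝ] (Fin 7 → ℝ) :=
      LinearMap.mk₂ ℝ law22 hadd1 hs1 (fun C A B => hadd2 A B C) (fun c C A => hs2 c A C)
    have hB : ∀ X Y, law22 X Y = B X Y := fun _ _ => rfl
    simp only [hB, map_sum, LinearMap.sum_apply, map_smul, LinearMap.smul_apply, Finset.sum_apply,
      Pi.smul_apply, smul_eq_mul, Finset.mul_sum]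
    rw [Finset.sum_comm]
    refine Finset.sum_congr rfl fun a _ => Finset.sum_congr rfl fun b _ => ?_
    ring
  have e2 : ∀ X, g⁻¹.val.mulVec X = ∑ i, X i • fun k => g⁻¹.val k i := by
    intro X; funext k; simp [Matrix.mulVec, dotProduct, mul_comm]
  simp only [act, e]
  rw [e2 X, e2 Y]
  simp only [Matrix.mulVec, dotProduct, hl, Finset.mul_sum]
  rw [Finset.sum_comm]
  refine Finset.sum_congr rfl fun a _ => ?_
  rw [Finset.sum_comm]
  refine Finset.sum_congr rfl fun b _ => Finset.sum_congr rfl fun l _ => ?_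
  ring

theorem diag_conj (T S D : Matrix (Fin 7) (Fin 7) ℝ) (hT : T.BlockTriangular rk)
    (hS : S.BlockTriangular rk) (hD : D.BlockTriangular rk) (hTS : T * S = 1) (i : Fin 7) :
    (T * D * S) i i = D i i ∧ T i i * S i i = 1 := by
  have key : ∀ A B : Matrix (Fin 7) (Fin 7) ℝ, A.BlockTriangular rk → B.BlockTriangular rk →
      (A * B) i i = A i i * B i i := by
    intro A B hA hB
    rw [Matrix.mul_apply]
    refine Finset.sum_eq_single i (fun j _ hj => ?_) (by simp)
    have : rk j ≠ rk i := by revert i j; decide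
    rcases lt_or_gt_of_ne this with h | h
    · rw [hA h, zero_mul]
    · rw [hB h, mul_zero]
  have h1 : T i i * S i i = 1 := by rw [← key T S hT hS, hTS, Matrix.one_apply_eq]
  refine ⟨?_, h1⟩
  rw [key _ _ (hT.mul hD) hS, key _ _ hT hD]
  linear_combination D i i * h1

theorem core (ν : Law 7) (a b1 b2 c1 c2 c3 d1 d2 d3 p q r s t u : ℝ) (ha : a ≠ 0) (hb : b1 ≠ 0)
    (hc : c1 ≠ 0)
    (hν : ∀ X Y : Fin 7 → ℝ, ν X Y =
    ![0, 0, 0, b1 * (X 1 * Y 2 - X 2 * Y 1) + c2 * (X 0 * Y 2 - X 2 * Y 0),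
      a * (X 0 * Y 1 - X 1 * Y 0) + b2 * (X 1 * Y 2 - X 2 * Y 1) + c3 * (X 0 * Y 2 - X 2 * Y 0),
      c1 * (X 0 * Y 2 - X 2 * Y 0),
      d1 * (X 0 * Y 1 - X 1 * Y 0) + d2 * (X 1 * Y 2 - X 2 * Y 1) + d3 * (X 0 * Y 2 - X 2 * Y 0)
       + p * (X 0 * Y 3 - X 3 * Y 0) + q * (X 1 * Y 5 - X 5 * Y 1) + r * (X 2 * Y 4 - X 4 * Y 2)
       + s * (X 0 * Y 5 - X 5 * Y 0) + t * (X 2 * Y 3 - X 3 * Y 2) + u * (X 2 * Y 5 - X 5 * Y 2)])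
    (h56 : momentMap ν 5 6 = 0) (h36 : momentMap ν 3 6 = 0) (h46 : momentMap ν 4 6 = 0)
    (htr : - momentMap ν 1 1 + momentMap ν 2 2 - momentMap ν 4 4 + momentMap ν 5 5 = 0) :
    IsDerivation ν (Matrix.diagonal ![0, -1, 1, 0, -1, 1, 0]) := by
  have hd3 : d3 = 0 := by
    simp [momentMap, hν, bVec, Fin.sum_univ_seven] at h56
    exact h56.resolve_left hc
  subst hd3
  have hd2 : d2 = 0 := by
    simp [momentMap, hν, bVec, Fin.sum_univ_seven] at h36
    exact h36.resolve_left hb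
  subst hd2
  have hd1 : d1 = 0 := by
    simp [momentMap, hν, bVec, Fin.sum_univ_seven] at h46
    exact h46.resolve_left ha
  subst hd1
  have key : b2 ^ 2 + c2 ^ 2 + 2 * c3 ^ 2 + s ^ 2 + t ^ 2 + 2 * u ^ 2 = 0 := by
    simp [momentMap, hν, bVec, Fin.sum_univ_seven] at htr
    linarith
  have hb2 : b2 = 0 := by nlinarith [sq_nonneg b2, sq_nonneg c2, sq_nonneg c3, sq_nonneg s, sq_nonneg t, sq_nonneg u]
  have hc2 : c2 = 0 := by nlinarith [sq_nonneg b2, sq_nonneg c2, sq_nonneg c3, sq_nonneg s, sq_nonneg t, sq_nonneg u]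
  have hc3 : c3 = 0 := by nlinarith [sq_nonneg b2, sq_nonneg c2, sq_nonneg c3, sq_nonneg s, sq_nonneg t, sq_nonneg u]
  have hs : s = 0 := by nlinarith [sq_nonneg b2, sq_nonneg c2, sq_nonneg c3, sq_nonneg s, sq_nonneg t, sq_nonneg u]
  have ht : t = 0 := by nlinarith [sq_nonneg b2, sq_nonneg c2, sq_nonneg c3, sq_nonneg s, sq_nonneg t, sq_nonneg u]
  have hu : u = 0 := by nlinarith [sq_nonneg b2, sq_nonneg c2, sq_nonneg c3, sq_nonneg s, sq_nonneg t, sq_nonneg u]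
  subst hb2 hc2 hc3 hs ht hu
  intro X Y
  rw [hν, hν, hν]
  funext k
  fin_cases k <;> simp [Matrix.mulVec_diagonal] <;> ring

/-- `g_{2.2}` is not an Einstein nilradical. -/
theorem stmt_12 : ¬ IsEinsteinNilradical law22 := by
  rintro ⟨g, c, φ, -, -, hder, hm⟩
  obtain ⟨K, hK, hT⟩ := qr g
  set G := K * g with hG
  set ψ := K.val * φ * K⁻¹.val with hψ
  have hder' : IsDerivation (act G law22) ψ := by
    rw [hG, ← act_act]; exact act_der K _ _ hder
  have hKK : K.val * K⁻¹.val = 1 := by rw [← Units.val_mul]; simp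
  have hm' : momentMap (act G law22) = c • (1 : Matrix (Fin 7) (Fin 7) ℝ) + ψ := by
    rw [hG, ← act_act, moment_act K hK _ (law22_expand g), hm, Matrix.mul_add, Matrix.add_mul,
      Matrix.mul_smul, Matrix.mul_one, Matrix.smul_mul, hKK]
  have hTS : G.val * G⁻¹.val = 1 := by rw [← Units.val_mul]; simp
  have hST : G⁻¹.val * G.val = 1 := by rw [← Units.val_mul]; simp
  have hS : G⁻¹.val.BlockTriangular rk := by
    have : Invertible G.val := ⟨G⁻¹.val, hST, hTS⟩
    rw [Matrix.coe_units_inv]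
    exact Matrix.blockTriangular_inv_of_blockTriangular hT
  obtain ⟨hD, hD1, hD2⟩ := der_law22 _ (der_of_act G _ _ hder')
  have hψD : ψ = G.val * (G⁻¹.val * ψ * G.val) * G⁻¹.val := by
    calc ψ = (G.val * G⁻¹.val) * ψ * (G.val * G⁻¹.val) := by rw [hTS]; simp
      _ = _ := by simp only [Matrix.mul_assoc]
  have hψT : ψ.BlockTriangular rk := by
    rw [hψD]; exact (hT.mul hD).mul hS
  have hdiag : ∀ i, ψ i i = (G⁻¹.val * ψ * G.val) i i := by
    intro i
    conv_lhs => rw [hψD]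
    exact (diag_conj _ _ _ hT hS hD hTS i).1
  have hne := fun i => (diag_conj _ _ _ hT hS hD hTS i).2
  have hT0 : ∀ i, G.val i i ≠ 0 := fun i h => by have := hne i; rw [h] at this; simp at this
  have hS0 : ∀ i, G⁻¹.val i i ≠ 0 := fun i h => by have := hne i; rw [h] at this; simp at this
  obtain ⟨a, b1, b2, c1, c2, c3, d1, d2, d3, p, q, r, s, t, u, ha, hb, hc, hν⟩ :=
    nilp_form G.val G⁻¹.val hT hS
  have hA := core (act G law22) a b1 b2 c1 c2 c3 d1 d2 d3 p q r s t u
    (by rw [ha]; exact mul_ne_zero (mul_ne_zero (hT0 _) (hS0 _)) (hS0 _))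
    (by rw [hb]; exact mul_ne_zero (mul_ne_zero (hT0 _) (hS0 _)) (hS0 _))
    (by rw [hc]; exact mul_ne_zero (mul_ne_zero (hT0 _) (hS0 _)) (hS0 _))
    hν
    (by rw [hm']; simpa using hψT (i := 5) (j := 6) (by decide))
    (by rw [hm']; simpa using hψT (i := 3) (j := 6) (by decide))
    (by rw [hm']; simpa using hψT (i := 4) (j := 6) (by decide))
    (by
      rw [hm']
      simp only [Matrix.add_apply, Matrix.smul_apply, Matrix.one_apply_eq, hdiag]
      linarith)
  obtain ⟨-, h1, -⟩ := der_law22 _ (der_of_act G _ _ hA)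
  have hAd : (Matrix.diagonal ![0, -1, 1, 0, -1, 1, 0] : Matrix (Fin 7) (Fin 7) ℝ).BlockTriangular rk :=
    Matrix.blockTriangular_diagonal _
  rw [(diag_conj _ _ _ hS hT hAd hST 1).1, (diag_conj _ _ _ hS hT hAd hST 2).1] at h1
  simp at h1
  norm_num at h1
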